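/- arXiv:2305.19301 — 2 statements merged into one kernel-verified Lean document; each statement's English description precedes it below -/
import Mathlib

section
/- Let (Ω, F, P) and (Ω′, F′, P′) be probability spaces, k, m ∈ ℕ, and let (X, Y₁, …, Y_k) : Ω → ℝ^{1+k} and (X′, Y′₁, …, Y′_m) : Ω′ → ℝ^{1+m} be random vectors whose laws are centered Gaussian measures. Let L := E[X | σ(Y₁, …, Y_k)] and L′ := E[X′ | σ(Y′₁, …, Y′_m)] denote the conditional expectations. If E[X²] = E[X′²] and E[(X − L)²] = E[(X′ − L′)²], then the law of the pair (X, L) equals the law of the pair (X′, L′) as Borel probability measures on ℝ². Equivalently, for a centered jointly Gaussian source and any jointly Gaussian encoded representation, the joint law of the source together with its MMSE estimate is determined by the source variance and the value of the MMSE alone (in particular it does not depend on which representation achieving a given rate/MMSE is used). -/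
open MeasureTheory ProbabilityTheory

/-- A Borel probability measure on a real normed space is a centered Gaussian measure if
its pushforward under every continuous linear functional is a centered one-dimensional
Gaussian distribution. -/
def IsCenteredGaussian {E : Type*} [NormedAddCommGroup E] [NormedSpace ℝ E]
    [MeasurableSpace E] (μ : Measure E) : Prop :=
  IsProbabilityMeasure μ ∧
    ∀ L : E →L[ℝ] ℝ, ∃ v : NNReal, μ.map L = gaussianReal 0 v

lemma exists_coeff {Ω : Type*} {F : MeasurableSpace Ω} (P : Measure Ω)
    (k : ℕ) (X : Ω → ℝ) (Y : Fin k → Ω → ℝ) (hX : MemLp X 2 P) (hY : ∀ i, MemLp (Y i) 2 P) :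
    ∃ c : Fin k → ℝ, ∀ j, ∫ ω, (X ω - ∑ i, c i * Y i ω) * Y j ω ∂P = 0 := by
  let x : Lp ℝ 2 P := hX.toLp X
  let y : Fin k → Lp ℝ 2 P := fun i => (hY i).toLp (Y i)
  let K : Submodule ℝ (Lp ℝ 2 P) := Submodule.span ℝ (Set.range y)
  have hfd : FiniteDimensional ℝ K := FiniteDimensional.span_of_finite ℝ (Set.finite_range y)
  have hmem : K.starProjection x ∈ K := K.starProjection_apply_mem x
  obtain ⟨c, hc⟩ := (Submodule.mem_span_range_iff_exists_fun ℝ).1 hmem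
  refine ⟨c, fun j => ?_⟩
  have h1 := (Submodule.mem_orthogonal' K _).1 (K.sub_starProjection_mem_orthogonal x) (y j)
    (Submodule.subset_span ⟨j, rfl⟩)
  rw [← hc, L2.inner_def] at h1
  rw [← h1]
  refine integral_congr_ae ?_
  have hs : ∀ᵐ ω ∂P, ∀ i, (c i • y i : Lp ℝ 2 P) ω = c i * Y i ω := by
    rw [ae_all_iff]
    intro i
    filter_upwards [Lp.coeFn_smul (c i) (y i), (hY i).coeFn_toLp] with ω h1 h2
    rw [h1, Pi.smul_apply, smul_eq_mul, h2]
  filter_upwards [Lp.coeFn_sub x (∑ i, c i • y i), hX.coeFn_toLp, (hY j).coeFn_toLp, hs,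
    Lp.coeFn_fun_finsetSum Finset.univ (fun i => c i • y i)] with ω h1 h2 h3 h4 h5
  rw [h1, Pi.sub_apply, h5, h2, h3]
  simp only [h4]
  simp [mul_comm]

lemma key_law {Ω : Type*} {F : MeasurableSpace Ω} (P : Measure Ω) [IsProbabilityMeasure P]
    (k : ℕ) (X : Ω → ℝ) (Y : Fin k → Ω → ℝ)
    (hX : Measurable X) (hY : ∀ i, Measurable (Y i))
    (hG : IsCenteredGaussian
      (P.map (fun ω => (Fin.cons (X ω) (fun i => Y i ω) : Fin (k + 1) → ℝ)))) :
    P.map (fun ω =>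
        (X ω, (P[X | ⨆ i, MeasurableSpace.comap (Y i) Real.measurableSpace]) ω)) =
    ((gaussianReal 0 (∫ ω, X ω ^ 2 ∂P - ∫ ω, (X ω -
        (P[X | ⨆ i, MeasurableSpace.comap (Y i) Real.measurableSpace]) ω) ^ 2 ∂P).toNNReal).prod
      (gaussianReal 0 (∫ ω, (X ω -
        (P[X | ⨆ i, MeasurableSpace.comap (Y i) Real.measurableSpace]) ω) ^ 2 ∂P).toNNReal)).map
      (fun p : ℝ × ℝ => (p.1 + p.2, p.1)) := by
  set V : Ω → Fin (k + 1) → ℝ := fun ω => Fin.cons (X ω) (fun i => Y i ω) with hV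
  have hVm : Measurable V := by
    refine measurable_pi_lambda _ fun i => ?_
    refine Fin.cases ?_ (fun i => ?_) i
    · simpa [hV] using hX
    · simpa [hV] using hY i
  obtain ⟨-, hG⟩ := hG
  have hVG : HasGaussianLaw V P :=
    ⟨isGaussian_of_map_eq_gaussianReal fun L => ⟨0, hG L⟩⟩
  have hmean : ∀ T : (Fin (k + 1) → ℝ) →L[ℝ] ℝ, ∫ ω, T (V ω) ∂P = 0 := by
    intro T
    obtain ⟨v, hv⟩ := hG T
    have h2 : ∫ x, x ∂((P.map V).map T) = 0 := by rw [hv]; simp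
    rw [Measure.map_map T.continuous.measurable hVm,
      integral_map (T.continuous.measurable.comp hVm).aemeasurable (by fun_prop)] at h2
    exact h2
  let pr : ∀ i : Fin (k + 1), (Fin (k + 1) → ℝ) →L[ℝ] ℝ := fun i => ContinuousLinearMap.proj i
  have hXG : HasGaussianLaw X P := by simpa [hV, pr] using hVG.map_fun (pr 0)
  have hYG : ∀ i, HasGaussianLaw (Y i) P := fun i => by
    simpa [hV, pr] using hVG.map_fun (pr i.succ)
  have hYmean : ∀ i, ∫ ω, Y i ω ∂P = 0 := fun i => by simpa [hV, pr] using hmean (pr i.succ)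
  obtain ⟨c, hc⟩ := exists_coeff P k X Y hXG.memLp_two (fun i => (hYG i).memLp_two)
  let TZ : (Fin (k + 1) → ℝ) →L[ℝ] ℝ := ∑ i, c i • pr i.succ
  let TW : (Fin (k + 1) → ℝ) →L[ℝ] ℝ := pr 0 - TZ
  let TY : (Fin (k + 1) → ℝ) →L[ℝ] (Fin k → ℝ) := ContinuousLinearMap.pi fun i => pr i.succ
  let Z : Ω → ℝ := fun ω => ∑ i, c i * Y i ω
  let W : Ω → ℝ := fun ω => X ω - Z ω
  have hTZ : ∀ ω, TZ (V ω) = Z ω := fun ω => by simp [TZ, pr, hV, Z]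
  have hTW : ∀ ω, TW (V ω) = W ω := fun ω => by
    simp only [TW, sub_apply, hTZ, W]; simp [pr, hV]
  have hZG : HasGaussianLaw Z P := by simpa only [hTZ] using hVG.map_fun TZ
  have hWG : HasGaussianLaw W P := by simpa only [hTW] using hVG.map_fun TW
  have hZ0 : ∫ ω, Z ω ∂P = 0 := by simpa only [hTZ] using hmean TZ
  have hW0 : ∫ ω, W ω ∂P = 0 := by simpa only [hTW] using hmean TW
  have hZm : Measurable Z := by fun_prop
  have hWm : Measurable W := by fun_prop
  -- independence
  have hind : IndepFun W (fun ω i => Y i ω) P := by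
    have hj := hVG.map_fun ((ContinuousLinearMap.pi fun _ : Fin 1 => TW).prod TY)
    have h1 : IndepFun (fun ω (_ : Fin 1) => W ω) (fun ω i => Y i ω) P := by
      refine HasGaussianLaw.indepFun_of_covariance_eval (X := fun _ : Fin 1 => W) (Y := Y) ?_ ?_
      · refine HasGaussianLaw.congr hj (ae_of_all _ fun ω => ?_)
        refine Prod.ext ?_ ?_
        · funext i; exact hTW ω
        · funext i; simp [TY, pr, hV]
      · intro _ j
        rw [covariance_eq_sub hWG.memLp_two (hYG j).memLp_two, hW0, zero_mul, sub_zero]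
        exact hc j
    exact h1.comp (φ := fun f : Fin 1 → ℝ => f 0) (ψ := id) (by fun_prop) measurable_id
  have hle : (⨆ i, MeasurableSpace.comap (Y i) Real.measurableSpace) ≤ F :=
    iSup_le fun i => (hY i).comap_le
  set G := ⨆ i, MeasurableSpace.comap (Y i) Real.measurableSpace with hGdef
  have hGeq : MeasurableSpace.comap (fun ω i => Y i ω) MeasurableSpace.pi = G := by
    rw [MeasurableSpace.pi, MeasurableSpace.comap_iSup]
    simp only [MeasurableSpace.comap_comp]
    rfl
  have hYGm : ∀ i, Measurable[G] (Y i) := fun i =>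
    (comap_measurable (Y i)).mono (le_iSup (fun i => MeasurableSpace.comap (Y i)
      Real.measurableSpace) i) le_rfl
  have hZGm : Measurable[G] Z := Finset.measurable_sum _ fun i _ => (hYGm i).const_mul (c i)
  have hcW : P[W | G] =ᵐ[P] fun _ => P[W] := by
    refine condExp_indep_eq hWm.comap_le hle (comap_measurable W).stronglyMeasurable ?_
    have := (IndepFun_iff_Indep W (fun ω i => Y i ω) P).1 hind
    rwa [hGeq] at this
  have hcZ : P[Z | G] = Z :=
    condExp_of_stronglyMeasurable hle hZGm.stronglyMeasurable hZG.integrable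
  have hL : P[X | G] =ᵐ[P] Z := by
    have hXe : X = Z + W := by funext ω; simp [W]
    have := condExp_add hZG.integrable hWG.integrable G
    rw [← hXe, hcZ] at this
    filter_upwards [this, hcW] with ω h1 h2
    rw [h1, Pi.add_apply, h2, hW0, add_zero]
  have hmm : ∫ ω, (X ω - (P[X | G]) ω) ^ 2 ∂P = ∫ ω, W ω ^ 2 ∂P := by
    refine integral_congr_ae ?_
    filter_upwards [hL] with ω h
    rw [h]
  have hindZ : IndepFun Z W P :=
    (hind.comp (φ := id) (ψ := fun y : Fin k → ℝ => ∑ i, c i * y i) measurable_id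
      (by fun_prop)).symm
  have hZvar : Var[Z; P] = ∫ ω, Z ω ^ 2 ∂P := variance_of_integral_eq_zero hZm.aemeasurable hZ0
  have hWvar : Var[W; P] = ∫ ω, W ω ^ 2 ∂P := variance_of_integral_eq_zero hWm.aemeasurable hW0
  have hXvar : ∫ ω, X ω ^ 2 ∂P = Var[Z; P] + Var[W; P] := by
    have hXe : X = Z + W := by funext ω; simp [W]
    have hX0 : ∫ ω, X ω ∂P = 0 := by simpa [hV, pr] using hmean (pr 0)
    rw [← hindZ.variance_add hZG.memLp_two hWG.memLp_two, ← hXe,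
      variance_of_integral_eq_zero hX.aemeasurable hX0]
  rw [hmm, ← hWvar, hXvar, add_sub_cancel_right]
  have hZl := hZG.map_eq_gaussianReal
  have hWl := hWG.map_eq_gaussianReal
  rw [hZ0] at hZl
  rw [hW0] at hWl
  rw [← hZl, ← hWl, ← (indepFun_iff_map_prod_eq_prod_map_map hZm.aemeasurable
    hWm.aemeasurable).1 hindZ, Measure.map_map (by fun_prop) (by fun_prop)]
  refine Measure.map_congr ?_
  filter_upwards [hL] with ω h
  simp [h, W]

/-- For centered jointly Gaussian sources, the joint law of the source together with its
MMSE estimate (conditional expectation given the encoded representation) is determined by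
the source variance and the MMSE value alone: if `(X, Y₁, …, Y_k)` and `(X', Y'₁, …, Y'_m)`
have centered Gaussian laws, `E[X²] = E[X'²]` and the mean squared errors of
`L = E[X | σ(Y₁,…,Y_k)]` and `L' = E[X' | σ(Y'₁,…,Y'_m)]` agree, then `(X, L)` and
`(X', L')` have the same law on `ℝ²`. -/
theorem statement15 {Ω Ω' : Type*} {F : MeasurableSpace Ω} {F' : MeasurableSpace Ω'}
    (P : Measure Ω) (P' : Measure Ω') [IsProbabilityMeasure P] [IsProbabilityMeasure P']
    (k m : ℕ) (X : Ω → ℝ) (Y : Fin k → Ω → ℝ) (X' : Ω' → ℝ) (Y' : Fin m → Ω' → ℝ)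
    (hX : Measurable X) (hY : ∀ i, Measurable (Y i))
    (hX' : Measurable X') (hY' : ∀ i, Measurable (Y' i))
    (hG : IsCenteredGaussian
      (P.map (fun ω => (Fin.cons (X ω) (fun i => Y i ω) : Fin (k + 1) → ℝ))))
    (hG' : IsCenteredGaussian
      (P'.map (fun ω => (Fin.cons (X' ω) (fun i => Y' i ω) : Fin (m + 1) → ℝ))))
    (hvar : ∫ ω, X ω ^ 2 ∂P = ∫ ω, X' ω ^ 2 ∂P')
    (hmmse :
      ∫ ω, (X ω - (P[X | ⨆ i, MeasurableSpace.comap (Y i) Real.measurableSpace]) ω) ^ 2 ∂P =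
      ∫ ω, (X' ω - (P'[X' | ⨆ i, MeasurableSpace.comap (Y' i) Real.measurableSpace]) ω) ^ 2
        ∂P') :
    P.map (fun ω =>
        (X ω, (P[X | ⨆ i, MeasurableSpace.comap (Y i) Real.measurableSpace]) ω)) =
      P'.map (fun ω =>
        (X' ω, (P'[X' | ⨆ i, MeasurableSpace.comap (Y' i) Real.measurableSpace]) ω)) := by
  rw [key_law P k X Y hX hY hG, key_law P' m X' Y' hX' hY' hG', hvar, hmmse]
end

section
/- Let ρ ∈ [−1, 1], D ∈ [0, 1), and let (X₁, X₂, X₃, Y₁, Y₂, Y₃) : Ω → ℝ⁶ be a random vector on a probability space (Ω, F, P) whose law is a centered Gaussian measure, with E[X_i X_j] = ρ^{|i−j|} for all i, j ∈ {1,2,3}, E[Y_i Y_j] = (1 − D) ρ^{|i−j|} for all i, j ∈ {1,2,3}, and E[X_j Y_j] = 1 − D for j = 1, 2, 3. Define X̂_j := Y_j / √(1 − D). Then (a) the law of (X̂₁, X̂₂, X̂₃) equals the law of (X₁, X₂, X₃) (so the scaled reconstructions satisfy the zero joint-distribution perception constraint), and (b) E[(X_j − X̂_j)²] = 2 − 2√(1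 − D) for each j = 1, 2, 3. Thus for the symmetric Gauss–Markov source, the MMSE representation achieving per-frame distortion D is transformed by a single scalar multiplication into a perfect-realism reconstruction with per-frame distortion 2 − 2√(1 − D). -/
open MeasureTheory ProbabilityTheory

lemma gauss_second_moment {Ω : Type*} {F : MeasurableSpace Ω} (P : Measure Ω)
    (Z : Ω → ℝ) (hZ : Measurable Z) (v : NNReal) (h : P.map Z = gaussianReal 0 v) :
    MemLp Z 2 P ∧ P.map Z = gaussianReal 0 (∫ ω, Z ω ^ 2 ∂P).toNNReal := by
  have h1 : MemLp Z 2 P := by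
    have := memLp_id_gaussianReal (μ := 0) (v := v) 2
    rw [← h] at this
    exact this.comp_of_map hZ.aemeasurable
  refine ⟨h1, ?_⟩
  have h2 : ∫ ω, Z ω ^ 2 ∂P = v := by
    have h3 : ∫ x, x ^ 2 ∂(P.map Z) = ∫ ω, Z ω ^ 2 ∂P :=
      integral_map hZ.aemeasurable (by fun_prop)
    rw [← h3, h]
    have h4 := variance_id_gaussianReal (μ := 0) (v := v)
    rw [variance_eq_integral (by fun_prop)] at h4
    simpa using h4
  rw [h2, h]; simp

lemma second_moment_lin {Ω : Type*} {F : MeasurableSpace Ω} (P : Measure Ω)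
    (Z : Fin 3 → Ω → ℝ) (hZ : ∀ i, MemLp (Z i) 2 P) (c : Fin 3 → ℝ) :
    ∫ ω, (∑ i, c i * Z i ω) ^ 2 ∂P = ∑ i, ∑ j, c i * c j * ∫ ω, Z i ω * Z j ω ∂P := by
  have hI : ∀ i j, Integrable (fun ω => c i * c j * (Z i ω * Z j ω)) P := fun i j =>
    ((hZ i).integrable_mul (hZ j)).const_mul _
  have : ∀ ω, (∑ i, c i * Z i ω) ^ 2 = ∑ i, ∑ j, c i * c j * (Z i ω * Z j ω) := by
    intro ω
    rw [sq, Finset.sum_mul_sum]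
    refine Finset.sum_congr rfl fun i _ => Finset.sum_congr rfl fun j _ => by ring
  simp_rw [this]
  rw [integral_finsetSum _ fun i _ => integrable_finsetSum _ fun j _ => hI i j]
  refine Finset.sum_congr rfl fun i _ => ?_
  rw [integral_finsetSum _ fun j _ => hI i j]
  refine Finset.sum_congr rfl fun j _ => ?_
  rw [integral_const_mul]

lemma clm_eq_sum (L : (Fin 3 → ℝ) →L[ℝ] ℝ) (x : Fin 3 → ℝ) :
    L x = ∑ i, L (Pi.single i 1) * x i := by
  conv_lhs => rw [pi_eq_sum_univ' x]
  rw [map_sum]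
  refine Finset.sum_congr rfl fun i _ => ?_
  rw [map_smul, smul_eq_mul, mul_comm]

/-- Universality by a single scalar multiplication for the symmetric three-frame
Gauss–Markov source: if `(X₁, X₂, X₃, Y₁, Y₂, Y₃)` is centered jointly Gaussian with
`E[X_i X_j] = ρ^{|i−j|}`, `E[Y_i Y_j] = (1 − D)ρ^{|i−j|}` and `E[X_j Y_j] = 1 − D`
(so `Y` is the MMSE representation at per-frame distortion `D`), then
`X̂_j := Y_j / √(1 − D)` satisfies (a) `(X̂₁, X̂₂, X̂₃)` has the same law as
`(X₁, X₂, X₃)` (zero joint-distribution perception loss) and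
(b) `E[(X_j − X̂_j)²] = 2 − 2√(1 − D)` for each `j`. -/
theorem statement16 {Ω : Type*} {F : MeasurableSpace Ω} (P : Measure Ω)
    [IsProbabilityMeasure P] (ρ D : ℝ) (hρ : ρ ∈ Set.Icc (-1 : ℝ) 1)
    (hD : D ∈ Set.Ico (0 : ℝ) 1)
    (X Y : Fin 3 → Ω → ℝ)
    (hXm : ∀ i, Measurable (X i)) (hYm : ∀ i, Measurable (Y i))
    (hG : IsCenteredGaussian
      (P.map (fun ω => (Fin.append (fun i => X i ω) (fun i => Y i ω) : Fin (3 + 3) → ℝ))))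
    (hXX : ∀ i j : Fin 3, ∫ ω, X i ω * X j ω ∂P = ρ ^ (((i : ℕ) : ℤ) - ((j : ℕ) : ℤ)).natAbs)
    (hYY : ∀ i j : Fin 3, ∫ ω, Y i ω * Y j ω ∂P =
      (1 - D) * ρ ^ (((i : ℕ) : ℤ) - ((j : ℕ) : ℤ)).natAbs)
    (hXY : ∀ j : Fin 3, ∫ ω, X j ω * Y j ω ∂P = 1 - D) :
    (P.map (fun ω => fun j : Fin 3 => Y j ω / Real.sqrt (1 - D)) =
      P.map (fun ω => fun j : Fin 3 => X j ω)) ∧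
    ∀ j : Fin 3, ∫ ω, (X j ω - Y j ω / Real.sqrt (1 - D)) ^ 2 ∂P
      = 2 - 2 * Real.sqrt (1 - D) := by
  obtain ⟨hD0, hD1⟩ := hD
  have hs : 0 < Real.sqrt (1 - D) := Real.sqrt_pos.mpr (by linarith)
  have hs2 : Real.sqrt (1 - D) ^ 2 = 1 - D := Real.sq_sqrt (by linarith)
  set s := Real.sqrt (1 - D) with hsdef
  obtain ⟨-, hG⟩ := hG
  have hVm : Measurable
      (fun ω => (Fin.append (fun i => X i ω) (fun i => Y i ω) : Fin (3 + 3) → ℝ)) := by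
    refine measurable_pi_lambda _ fun i => ?_
    refine Fin.addCases (fun i => ?_) (fun i => ?_) i
    · simpa using hXm i
    · simpa only [Fin.append_right] using hYm i
  -- linear combinations of the `X` block and of the `Y` block are centered Gaussian
  have hXG : ∀ c : Fin 3 → ℝ, ∃ v : NNReal,
      P.map (fun ω => ∑ i, c i * X i ω) = gaussianReal 0 v := by
    intro c
    obtain ⟨v, hv⟩ := hG (∑ i : Fin 3, c i •
      (ContinuousLinearMap.proj (Fin.castAdd 3 i) : (Fin (3 + 3) → ℝ) →L[ℝ] ℝ))
    refine ⟨v, ?_⟩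
    rw [Measure.map_map (by fun_prop) hVm] at hv
    rw [← hv]
    congr 1
  have hYG : ∀ c : Fin 3 → ℝ, ∃ v : NNReal,
      P.map (fun ω => ∑ i, c i * Y i ω) = gaussianReal 0 v := by
    intro c
    obtain ⟨v, hv⟩ := hG (∑ i : Fin 3, c i •
      (ContinuousLinearMap.proj (Fin.natAdd 3 i) : (Fin (3 + 3) → ℝ) →L[ℝ] ℝ))
    refine ⟨v, ?_⟩
    rw [Measure.map_map (by fun_prop) hVm] at hv
    rw [← hv]
    congr 1
  have hX2 : ∀ i, MemLp (X i) 2 P := by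
    intro i
    obtain ⟨v, hv⟩ := hXG (Pi.single i 1)
    have := (gauss_second_moment P _ (by fun_prop) v hv).1
    simpa [Pi.single_apply] using this
  have hY2 : ∀ i, MemLp (Y i) 2 P := by
    intro i
    obtain ⟨v, hv⟩ := hYG (Pi.single i 1)
    have := (gauss_second_moment P _ (by fun_prop) v hv).1
    simpa [Pi.single_apply] using this
  have hXv : Measurable (fun ω => fun j : Fin 3 => X j ω) := measurable_pi_lambda _ hXm
  have hYv : Measurable (fun ω => fun j : Fin 3 => Y j ω / s) :=
    measurable_pi_lambda _ fun j => (hYm j).div_const s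
  refine ⟨?_, ?_⟩
  · have := Measure.isProbabilityMeasure_map (μ := P) hXv.aemeasurable
    have := Measure.isProbabilityMeasure_map (μ := P) hYv.aemeasurable
    refine Measure.ext_of_charFunDual ?_
    ext L
    rw [charFunDual_eq_charFun_map_one, charFunDual_eq_charFun_map_one]
    congr 1
    rw [Measure.map_map (by fun_prop) hXv, Measure.map_map (by fun_prop) hYv]
    have e1 : (⇑L ∘ fun ω => fun j : Fin 3 => X j ω)
        = fun ω => ∑ i, L (Pi.single i 1) * X i ω := by
      ext ω; exact clm_eq_sum L _
    have e2 : (⇑L ∘ fun ω => fun j : Fin 3 => Y j ω / s)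
        = fun ω => ∑ i, (L (Pi.single i 1) / s) * Y i ω := by
      ext ω
      refine (clm_eq_sum L _).trans (Finset.sum_congr rfl fun i _ => by ring)
    rw [e1, e2]
    obtain ⟨v, hv⟩ := hXG (fun i => L (Pi.single i 1))
    obtain ⟨w, hw⟩ := hYG (fun i => L (Pi.single i 1) / s)
    rw [(gauss_second_moment P _ (by fun_prop) v hv).2,
      (gauss_second_moment P _ (by fun_prop) w hw).2,
      second_moment_lin P X hX2 (fun i => L (Pi.single i 1)),
      second_moment_lin P Y hY2 (fun i => L (Pi.single i 1) / s)]
    congr 2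
    refine Finset.sum_congr rfl fun i _ => Finset.sum_congr rfl fun j _ => ?_
    rw [hXX, hYY, ← hs2]
    field_simp
  · intro j
    have iXX : Integrable (fun ω => X j ω * X j ω) P := (hX2 j).integrable_mul (hX2 j)
    have iXY : Integrable (fun ω => (2 / s) * (X j ω * Y j ω)) P :=
      ((hX2 j).integrable_mul (hY2 j)).const_mul _
    have iYY : Integrable (fun ω => (1 / s ^ 2) * (Y j ω * Y j ω)) P :=
      ((hY2 j).integrable_mul (hY2 j)).const_mul _
    have e : ∀ ω, (X j ω - Y j ω / s) ^ 2
        = X j ω * X j ω - (2 / s) * (X j ω * Y j ω) + (1 / s ^ 2) * (Y j ω * Y j ω) := by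
      intro ω; field_simp; ring
    simp_rw [e]
    have iS : Integrable (fun ω => X j ω * X j ω - (2 / s) * (X j ω * Y j ω)) P := iXX.sub iXY
    rw [integral_add iS iYY, integral_sub iXX iXY, integral_const_mul,
      integral_const_mul, hXX, hXY, hYY, ← hs2]
    simp only [sub_self, Int.natAbs_zero, pow_zero]
    field_simp
    ring
end
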